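/- Let P be a normal logic program over its finite set of atoms a_1, …, a_n, let ⊗ be a t-norm and ⊕ a t-conorm, and let τ, φ ∈ [0,1]^n satisfy: τ = 𝒞_{P,φ}^∞(τ₀) for some τ₀ ≤ 𝒞_{P,φ}^∞(0) componentwise, the iteration of 𝒞_{P,φ} from the zero vector reaches 𝒞_{P,φ}^∞(0) after finitely many steps, and the membership score p defined by p_i = (τ_i + 1 − φ_i)/2 satisfies p ∈ {0,1}^n. Then the set [p] = { a_i : p_i = 1 } is a stable model of P. -/

import Mathlib

instance : Fact ((0:ℝ) ≤ 1) := ⟨zero_le_one⟩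

/-- A rule of a normal logic program: head atom, positive body atoms, default-negated body atoms. -/
structure Rule (α : Type) where
  head : α
  pos : Finset α
  neg : Finset α
deriving DecidableEq

/-- A t-norm on the unit interval: commutative, associative, monotone in each argument,
with unit `1`. -/
structure Tnorm where
  f : unitInterval → unitInterval → unitInterval
  comm : ∀ x y, f x y = f y x
  assoc : ∀ x y z, f (f x y) z = f x (f y z)
  mono : ∀ ⦃x x' y y'⦄, x ≤ x' → y ≤ y' → f x y ≤ f x' y'
  one_left : ∀ x, f 1 x = x

/-- A t-conorm on the unit interval: commutative, associative, monotone in each argument,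
with unit `0`. -/
structure Tconorm where
  f : unitInterval → unitInterval → unitInterval
  comm : ∀ x y, f x y = f y x
  assoc : ∀ x y z, f (f x y) z = f x (f y z)
  mono : ∀ ⦃x x' y y'⦄, x ≤ x' → y ≤ y' → f x y ≤ f x' y'
  zero_left : ∀ x, f 0 x = x

instance (t : Tnorm) : Std.Commutative t.f := ⟨t.comm⟩
instance (t : Tnorm) : Std.Associative t.f := ⟨t.assoc⟩
instance (s : Tconorm) : Std.Commutative s.f := ⟨s.comm⟩
instance (s : Tconorm) : Std.Associative s.f := ⟨s.assoc⟩

/-- ⊗-product of `g` over a finite set (empty product = `1`). -/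
def tnormProd {β : Type} (t : Tnorm) (g : β → unitInterval) (s : Finset β) : unitInterval :=
  s.fold t.f 1 g

/-- ⊕-sum of `g` over a finite set (empty sum = `0`). -/
def tconormSum {β : Type} (s : Tconorm) (g : β → unitInterval) (q : Finset β) : unitInterval :=
  q.fold s.f 0 g

/-- Support `ρ(τ,φ)` of a rule: the ⊗-product of the values of all its body literals,
where `val(a) = τ a` and `val(not a) = φ a`. -/
def support {α : Type} (t : Tnorm) (τ φ : α → unitInterval) (r : Rule α) : unitInterval :=
  t.f (tnormProd t τ r.pos) (tnormProd t φ r.neg)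

/-- The soft immediate consequence operator `𝒞_{P,φ}(τ)`: for each atom `a`, the ⊕-sum of
the supports of all rules with head `a`. -/
def softC {α : Type} [DecidableEq α] (t : Tnorm) (s : Tconorm) (P : Finset (Rule α))
    (φ τ : α → unitInterval) : α → unitInterval :=
  fun a => tconormSum s (support t τ φ) (P.filter fun r => r.head = a)

/-- The set induced by a degree vector: `[ψ] = { a | ψ a = 1 }`. -/
def induced {α : Type} (ψ : α → unitInterval) : Set α := { a | ψ a = 1 }

/-- The Gelfond–Lifschitz reduct `P^S`. -/
def reduct {α : Type} (P : Finset (Rule α)) (S : Set α) : Set (Rule α) :=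
  { r' | ∃ r ∈ P, (∀ b ∈ r.neg, b ∉ S) ∧ r' = ⟨r.head, r.pos, ∅⟩ }

/-- `M` is a model of the set of rules `Q`. -/
def isModel {α : Type} (Q : Set (Rule α)) (M : Set α) : Prop :=
  ∀ r ∈ Q, ↑r.pos ⊆ M → (∀ b ∈ r.neg, b ∉ M) → r.head ∈ M

/-- `S` is a stable model of `P`: `S` is the least model of the reduct `P^S`. -/
def isStableModel {α : Type} (P : Finset (Rule α)) (S : Set α) : Prop :=
  isModel (reduct P S) S ∧ ∀ M : Set α, isModel (reduct P S) M → S ⊆ M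

theorem aux_zero_tnorm (t : Tnorm) (x : unitInterval) : t.f 0 x = 0 := by
  apply le_antisymm _ (unitInterval.nonneg')
  calc t.f 0 x ≤ t.f 0 1 := t.mono le_rfl unitInterval.le_one'
    _ = 0 := by rw [t.comm, t.one_left]

theorem aux_prod_one {β : Type} (t : Tnorm) (g : β → unitInterval) (q : Finset β)
    (h : ∀ b ∈ q, g b = 1) : tnormProd t g q = 1 := by
  classical
  induction q using Finset.induction_on with
  | empty => simp [tnormProd]
  | insert a q ha ih =>
    have h1 := ih (fun b hb => h b (Finset.mem_insert_of_mem hb))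
    unfold tnormProd at *
    rw [Finset.fold_insert ha, h1, h a (Finset.mem_insert_self a q), t.one_left]

theorem aux_prod_ne {β : Type} (t : Tnorm) (g : β → unitInterval) (q : Finset β)
    (h : tnormProd t g q ≠ 0) (b : β) (hb : b ∈ q) : g b ≠ 0 := by
  classical
  intro h0
  apply h
  unfold tnormProd
  rw [← Finset.insert_erase hb, Finset.fold_insert (Finset.notMem_erase b q), h0,
    aux_zero_tnorm]

theorem aux_sum_ne {β : Type} (s : Tconorm) (g : β → unitInterval) (q : Finset β)
    (h : tconormSum s g q ≠ 0) : ∃ b ∈ q, g b ≠ 0 := by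
  classical
  by_contra hc
  push Not at hc
  apply h
  clear h
  induction q using Finset.induction_on with
  | empty => simp [tconormSum]
  | insert a q ha ih =>
    have h1 := ih (fun b hb => hc b (Finset.mem_insert_of_mem hb))
    unfold tconormSum at *
    rw [Finset.fold_insert ha, h1, hc a (Finset.mem_insert_self a q), s.zero_left]

theorem aux_sum_one {β : Type} (s : Tconorm) (g : β → unitInterval) (q : Finset β)
    (b : β) (hb : b ∈ q) (h : g b = 1) : tconormSum s g q = 1 := by
  classical
  unfold tconormSum
  rw [← Finset.insert_erase hb, Finset.fold_insert (Finset.notMem_erase b q), h]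
  apply le_antisymm unitInterval.le_one'
  calc (1 : unitInterval) = s.f 1 0 := by rw [s.comm, s.zero_left]
    _ ≤ _ := s.mono le_rfl unitInterval.nonneg'

theorem aux_step {α : Type} [DecidableEq α] (t : Tnorm) (s : Tconorm) (P : Finset (Rule α))
    (φ ψ : α → unitInterval) (S M : Set α) (hM : isModel (reduct P S) M)
    (hS : ∀ a, φ a ≠ 0 → a ∉ S) (hψ : ∀ a, ψ a ≠ 0 → a ∈ M) :
    ∀ a, softC t s P φ ψ a ≠ 0 → a ∈ M := by
  intro a ha
  obtain ⟨r, hr, hne⟩ := aux_sum_ne s _ _ ha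
  rw [Finset.mem_filter] at hr
  obtain ⟨hrP, rfl⟩ := hr
  have h1 : tnormProd t ψ r.pos ≠ 0 := by
    intro h0
    apply hne
    rw [support, h0, aux_zero_tnorm]
  have h2 : tnormProd t φ r.neg ≠ 0 := by
    intro h0
    apply hne
    rw [support, h0, t.comm, aux_zero_tnorm]
  exact hM ⟨r.head, r.pos, ∅⟩
    ⟨r, hrP, fun b hb => hS b (aux_prod_ne t φ _ h2 b hb), rfl⟩
    (fun b hb => hψ b (aux_prod_ne t ψ _ h1 b hb)) (by simp)

theorem aux_iter {α : Type} [DecidableEq α] (t : Tnorm) (s : Tconorm) (P : Finset (Rule α))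
    (φ ψ : α → unitInterval) (S M : Set α) (hM : isModel (reduct P S) M)
    (hS : ∀ a, φ a ≠ 0 → a ∉ S) (hψ : ∀ a, ψ a ≠ 0 → a ∈ M) (k : ℕ) :
    ∀ a, (softC t s P φ)^[k] ψ a ≠ 0 → a ∈ M := by
  induction k with
  | zero => exact hψ
  | succ k ih =>
    rw [Function.iterate_succ_apply']
    exact aux_step t s P φ _ S M hM hS ih

/-- If `τ = 𝒞_{P,φ}^∞(τ₀)` for some `τ₀ ≤ 𝒞_{P,φ}^∞(0)`, the
iteration from the zero vector stabilizes after finitely many steps, and the membership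
score `p_i = (τ_i + 1 − φ_i)/2` is binary, then `[p]` is a stable model of `P`. -/
theorem binary_terminal_state_yields_stable_model {α : Type} [Fintype α] [DecidableEq α]
    (t : Tnorm) (s : Tconorm) (P : Finset (Rule α)) (τ φ τ₀ : α → unitInterval)
    (hτ₀ : τ₀ ≤ ⨆ k : ℕ, (softC t s P φ)^[k] (fun _ => 0))
    (hlim : ∃ m : ℕ, ∀ k ≥ m, (softC t s P φ)^[k] τ₀ = τ)
    (hstab : ∃ m : ℕ,
      (softC t s P φ)^[m] (fun _ => 0) = ⨆ k : ℕ, (softC t s P φ)^[k] (fun _ => 0))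
    (hp : ∀ a, ((τ a : ℝ) + 1 - (φ a : ℝ)) / 2 = 0 ∨
               ((τ a : ℝ) + 1 - (φ a : ℝ)) / 2 = 1) :
    isStableModel P { a | ((τ a : ℝ) + 1 - (φ a : ℝ)) / 2 = 1 } := by
  obtain ⟨m, hm⟩ := hlim
  obtain ⟨l, hl⟩ := hstab
  have hfix : softC t s P φ τ = τ := by
    have h := hm (m + 1) (Nat.le_succ m)
    rwa [Function.iterate_succ_apply', hm m le_rfl] at h
  have hbin1 : ∀ a, ((τ a : ℝ) + 1 - (φ a : ℝ)) / 2 = 1 → τ a = 1 ∧ φ a = 0 := by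
    intro a ha
    have h1 := (τ a).2.2
    have h2 := (φ a).2.1
    constructor
    · apply Subtype.ext
      change (τ a : ℝ) = 1
      linarith
    · apply Subtype.ext
      change (φ a : ℝ) = 0
      linarith
  have hbin0 : ∀ a, ¬ ((τ a : ℝ) + 1 - (φ a : ℝ)) / 2 = 1 → φ a = 1 := by
    intro a ha
    have h0 := (hp a).resolve_right ha
    have h1 := (τ a).2.1
    have h2 := (φ a).2.2
    apply Subtype.ext
    change (φ a : ℝ) = 1
    linarith
  constructor
  · rintro _ ⟨r, hr, hneg, rfl⟩ hpos -
    have hsup : support t τ φ r = 1 := by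
      rw [support, aux_prod_one t τ _ (fun b hb => (hbin1 b (hpos hb)).1),
        aux_prod_one t φ _ (fun b hb => hbin0 b (hneg b hb)), t.one_left]
    have hτ1 : τ r.head = 1 := by
      rw [← hfix]
      exact aux_sum_one s _ _ r (by simp [hr]) hsup
    change ((τ r.head : ℝ) + 1 - (φ r.head : ℝ)) / 2 = 1
    refine (hp r.head).resolve_left ?_
    intro h0
    have h2 := (φ r.head).2.2
    rw [hτ1] at h0
    simp at h0
    linarith
  · intro M hM a ha
    have hS : ∀ a, φ a ≠ 0 → a ∉ { a | ((τ a : ℝ) + 1 - (φ a : ℝ)) / 2 = 1 } :=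
      fun a h h1 => h (hbin1 a h1).2
    have hL := aux_iter t s P φ (fun _ => 0) _ M hM hS (fun a h => absurd rfl h) l
    rw [← hl] at hτ₀
    have h0 : ∀ a, τ₀ a ≠ 0 → a ∈ M := by
      intro a h
      apply hL a
      intro h'
      have h3 := hτ₀ a
      rw [h'] at h3
      exact h (le_antisymm h3 unitInterval.nonneg')
    have h := aux_iter t s P φ τ₀ _ M hM hS h0 m a
    rw [hm m le_rfl, (hbin1 a ha).1] at h
    exact h one_ne_zero
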